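/- Let (X,π) and (Y,σ) be semidynamical systems on metric spaces with Y a complete metric space, and let h : X → Y be a homomorphism, i.e. h is continuous and h(π(z,t)) = σ(h(z),t) for all z ∈ X and t ≥ 0. Let y ∈ Y be asymptotically almost periodic (with respect to σ), and let x ∈ X satisfy h(x) = y and have cl(π⁺(x)) compact. Assume that for each point q ∈ L⁺(y) there is a unique p ∈ X with h(p) = q. Then x is asymptotically almost periodic (with respect to π). -/

import Mathlib

/-!
Let `p` be an almost periodic point whose motion is tracked by that of `y` through the
reparametrization `g`, and let `M` be the positive limit set of `y`.  Recurrence of `p`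
gives `p ∈ M`, and `M` is closed and positively invariant.  Compactness of
`K = closure (π⁺(x))` yields `x' ∈ K` with `h x' = p`, and the orbit of `x'` stays in
`K ∩ h⁻¹(M)`.

Since `h` is injective over `M`, a compactness argument (`key`) gives a uniform inverse
estimate: for `u ∈ K` and `v ∈ K ∩ h⁻¹(M)`, if `h u` and `h v` are close, then `u` and `v`
are close.  With `u, v` both on the orbit of `x'` it transfers almost periodicity from `p` to
`x'`; with `u = π x t` and `v = π x' (g t)` it transfers the tracking, with the same `g`.
-/

open Filter Topology
open scoped NNReal

/-- `π` is a semidynamical system on the metric space `Z`. -/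
def IsSDS {Z : Type*} [MetricSpace Z] (π : Z → ℝ≥0 → Z) : Prop :=
  Continuous (fun p : Z × ℝ≥0 => π p.1 p.2) ∧ (∀ z, π z 0 = z) ∧
    ∀ z t s, π (π z t) s = π z (t + s)

/-- The positive limit set of a point `x` under `π`. -/
def limitSet {Z : Type*} [MetricSpace Z] (π : Z → ℝ≥0 → Z) (x : Z) : Set Z :=
  {p | ∃ t : ℕ → ℝ≥0, Tendsto t atTop atTop ∧
    Tendsto (fun n => π x (t n)) atTop (𝓝 p)}

/-- `x` is an almost periodic point of the semidynamical system `π`. -/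
def AlmostPer {Z : Type*} [MetricSpace Z] (π : Z → ℝ≥0 → Z) (x : Z) : Prop :=
  ∀ ε : ℝ, 0 < ε → ∃ T : ℝ≥0, 0 < T ∧ ∀ α : ℝ≥0, ∃ τ : ℝ≥0,
    α ≤ τ ∧ τ ≤ α + T ∧ 0 < τ ∧ ∀ t : ℝ≥0, dist (π x (t + τ)) (π x t) < ε

/-- `x` is asymptotically almost periodic: its motion tracks that of an almost periodic
point up to a time reparametrization. -/
def AsympAP {Z : Type*} [MetricSpace Z] (π : Z → ℝ≥0 → Z) (x : Z) : Prop :=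
  ∃ p : Z, AlmostPer π p ∧ ∃ g : ℝ≥0 ≃ₜ ℝ≥0, g 0 = 0 ∧
    Tendsto (fun t : ℝ≥0 => dist (π x t) (π p (g t))) atTop (𝓝 0)

/-- The positive limit set is the set of cluster points of the motion at infinity. -/
lemma mem_limitSet_iff {Z : Type*} [MetricSpace Z] (π : Z → ℝ≥0 → Z) (x q : Z) :
    q ∈ limitSet π x ↔ MapClusterPt q atTop (π x) := by
  constructor
  · rintro ⟨t, ht, hq⟩
    exact MapClusterPt.of_comp ht hq.mapClusterPt
  · intro hq
    have hne : (atTop ⊓ comap (π x) (𝓝 q)).NeBot := by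
      rw [← map_neBot_iff (π x), Filter.push_pull, inf_comm]
      exact hq
    obtain ⟨t, ht⟩ := exists_seq_tendsto (atTop ⊓ comap (π x) (𝓝 q))
    rw [tendsto_inf, tendsto_comap_iff] at ht
    exact ⟨t, ht.1, ht.2⟩

lemma isClosed_limitSet {Z : Type*} [MetricSpace Z] (π : Z → ℝ≥0 → Z) (x : Z) :
    IsClosed (limitSet π x) := by
  have : limitSet π x = {q | ClusterPt q (map (π x) atTop)} := by
    ext q
    exact mem_limitSet_iff π x q
  rw [this]
  exact isClosed_setOfPred_clusterPt

lemma limitSet_invariant {Z : Type*} [MetricSpace Z] {π : Z → ℝ≥0 → Z} (hπ : IsSDS π)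
    {x q : Z} (hq : q ∈ limitSet π x) (s : ℝ≥0) : π q s ∈ limitSet π x := by
  obtain ⟨t, ht, hq⟩ := hq
  refine ⟨fun n => t n + s, tendsto_atTop_mono (fun _ => le_self_add) ht, ?_⟩
  have hc : Continuous fun z => π z s := hπ.1.comp (by fun_prop : Continuous fun z : Z => (z, s))
  simpa [Function.comp_def, hπ.2.2] using (hc.tendsto q).comp hq

lemma homeomorph_tendsto_atTop (g : ℝ≥0 ≃ₜ ℝ≥0) : Tendsto g atTop atTop := by
  simpa [cocompact_eq_atTop] using g.isClosedEmbedding.tendsto_cocompact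

/-- Almost periodic points are recurrent, so a motion tracking that of `p` accumulates
at `p`. -/
lemma mem_limitSet_of_tracks {Z : Type*} [MetricSpace Z] {σ : Z → ℝ≥0 → Z} (hσ : IsSDS σ)
    {y p : Z} (hp : AlmostPer σ p) (g : ℝ≥0 ≃ₜ ℝ≥0)
    (hg : Tendsto (fun t : ℝ≥0 => dist (σ y t) (σ p (g t))) atTop (𝓝 0)) :
    p ∈ limitSet σ y := by
  have H : ∀ n : ℕ, ∃ τ : ℝ≥0, (n : ℝ≥0) ≤ τ ∧ dist (σ p τ) p < 1 / ((n : ℝ) + 1) := by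
    intro n
    obtain ⟨T, -, hT⟩ := hp (1 / ((n : ℝ) + 1)) (by positivity)
    obtain ⟨τ, h1, -, -, h2⟩ := hT n
    exact ⟨τ, h1, by simpa [hσ.2.1] using h2 0⟩
  choose τ hτ hd using H
  have hτt : Tendsto τ atTop atTop := tendsto_atTop_mono hτ tendsto_natCast_atTop_atTop
  have ht : Tendsto (fun n => g.symm (τ n)) atTop atTop :=
    (homeomorph_tendsto_atTop g.symm).comp hτt
  refine ⟨_, ht, ?_⟩
  rw [tendsto_iff_dist_tendsto_zero]
  have h1 : Tendsto (fun n => dist (σ y (g.symm (τ n))) (σ p (τ n))) atTop (𝓝 0) := by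
    simpa [Function.comp_def] using hg.comp ht
  have h2 := h1.add tendsto_one_div_add_atTop_nhds_zero_nat
  rw [add_zero] at h2
  exact squeeze_zero (fun _ => dist_nonneg)
    (fun n => (dist_triangle _ (σ p (τ n)) _).trans (add_le_add le_rfl (hd n).le)) h2

/-- Uniform inverse estimate for a continuous map that is injective over a closed set `M`;
only one of the two points has to lie over `M`. -/
lemma key {X Y : Type*} [MetricSpace X] [MetricSpace Y] {h : X → Y} (hcont : Continuous h)
    {K : Set X} (hK : IsCompact K) {M : Set Y} (hM : IsClosed M)
    (hinj : ∀ a b, h b ∈ M → h a = h b → a = b) {ε : ℝ} (hε : 0 < ε) :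
    ∃ δ > 0, ∀ u ∈ K, ∀ v ∈ K, h v ∈ M → dist (h u) (h v) < δ → dist u v < ε := by
  have hS : IsCompact ((K ×ˢ (K ∩ h ⁻¹' M)) ∩ {w : X × X | ε ≤ dist w.1 w.2}) :=
    (hK.prod (hK.inter_right (hM.preimage hcont))).inter_right
      (isClosed_le (by fun_prop) (by fun_prop))
  rcases Set.eq_empty_or_nonempty
    ((K ×ˢ (K ∩ h ⁻¹' M)) ∩ {w : X × X | ε ≤ dist w.1 w.2}) with he | hne
  · refine ⟨1, one_pos, fun u hu v hv hvM _ => ?_⟩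
    by_contra hlt
    have : (u, v) ∈ ((K ×ˢ (K ∩ h ⁻¹' M)) ∩ {w : X × X | ε ≤ dist w.1 w.2}) :=
      ⟨⟨hu, hv, hvM⟩, not_lt.1 hlt⟩
    simp [he] at this
  · obtain ⟨⟨a, b⟩, ⟨⟨_, _, hbM⟩, hab⟩, hmin⟩ := hS.exists_isMinOn hne
      (f := fun w : X × X => dist (h w.1) (h w.2)) (by fun_prop)
    refine ⟨dist (h a) (h b), ?_, fun u hu v hv hvM hd => ?_⟩
    · refine dist_pos.2 fun hab' => ?_
      have := hinj a b hbM hab'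
      subst this
      simp only [Set.mem_ofPred_eq, dist_self] at hab
      exact absurd hε (not_lt.2 hab)
    · by_contra hlt
      have hm : (u, v) ∈ ((K ×ˢ (K ∩ h ⁻¹' M)) ∩ {w : X × X | ε ≤ dist w.1 w.2}) :=
        ⟨⟨hu, hv, hvM⟩, not_lt.1 hlt⟩
      exact absurd hd (not_lt.2 (hmin hm))

lemma closure_orbit_invariant {Z : Type*} [MetricSpace Z] {π : Z → ℝ≥0 → Z} (hπ : IsSDS π)
    {x z : Z} (hz : z ∈ closure (Set.range (π x))) (s : ℝ≥0) :
    π z s ∈ closure (Set.range (π x)) := by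
  have hc : Continuous fun z => π z s := hπ.1.comp (by fun_prop : Continuous fun z : Z => (z, s))
  refine map_mem_closure (f := fun z => π z s) hc hz ?_
  rintro _ ⟨t, rfl⟩
  exact ⟨t + s, (hπ.2.2 x t s).symm⟩

theorem stmt_16 {X Y : Type*} [MetricSpace X] [MetricSpace Y] [CompleteSpace Y]
    (π : X → ℝ≥0 → X) (σ : Y → ℝ≥0 → Y) (hπ : IsSDS π) (hσ : IsSDS σ)
    (h : X → Y) (hcont : Continuous h)
    (hhom : ∀ z : X, ∀ t : ℝ≥0, h (π z t) = σ (h z) t)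
    (y : Y) (hy : AsympAP σ y)
    (x : X) (hxy : h x = y)
    (hcpt : IsCompact (closure (Set.range (π x))))
    (huniq : ∀ q ∈ limitSet σ y, ∃! p : X, h p = q) :
    AsympAP π x := by
  obtain ⟨p, hp, g, hg0, hg⟩ := hy
  have hpM : p ∈ limitSet σ y := mem_limitSet_of_tracks hσ hp g hg
  have hinj : ∀ a b, h b ∈ limitSet σ y → h a = h b → a = b :=
    fun a b hb hab => (huniq _ hb).unique hab rfl
  -- the orbit of `y` lies in the closed set `h '' K`, hence so does its limit point `p`
  obtain ⟨x', hx'K, hx'⟩ : ∃ x' ∈ closure (Set.range (π x)), h x' = p := by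
    obtain ⟨t, -, ht⟩ := hpM
    refine (hcpt.image hcont).isClosed.mem_of_tendsto ht (Eventually.of_forall fun n => ?_)
    exact ⟨π x (t n), subset_closure ⟨_, rfl⟩, by rw [hhom, hxy]⟩
  have hoK : ∀ s, π x' s ∈ closure (Set.range (π x)) := closure_orbit_invariant hπ hx'K
  have hoM : ∀ s, h (π x' s) ∈ limitSet σ y := by
    intro s
    rw [hhom, hx']
    exact limitSet_invariant hσ hpM s
  refine ⟨x', fun ε hε => ?_, g, hg0, ?_⟩
  · obtain ⟨δ, hδ, hk⟩ := key hcont hcpt (isClosed_limitSet σ y) hinj hε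
    obtain ⟨T, hT, H⟩ := hp δ hδ
    refine ⟨T, hT, fun α => ?_⟩
    obtain ⟨τ, h1, h2, h3, h4⟩ := H α
    refine ⟨τ, h1, h2, h3, fun t => hk _ (hoK _) _ (hoK _) (hoM _) ?_⟩
    rw [hhom, hhom, hx']
    exact h4 t
  · rw [Metric.tendsto_nhds] at hg ⊢
    intro ε hε
    obtain ⟨δ, hδ, hk⟩ := key hcont hcpt (isClosed_limitSet σ y) hinj hε
    filter_upwards [hg δ hδ] with t ht
    rw [Real.dist_0_eq_abs, abs_of_nonneg dist_nonneg] at ht ⊢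
    refine hk _ (subset_closure ⟨_, rfl⟩) _ (hoK _) (hoM _) ?_
    rw [hhom, hhom, hx', hxy]
    exact ht
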